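/- Transitivity of quasi-stable degeneration: let A be a finite-dimensional k-algebra, let X, Y, Z be finitely generated left A-modules with fixed syzygy sequences (X_i), (Y_i), (Z_i), and let m, n, l be integers. Suppose there exists an integer k₁ with k₁ ≥ m and k₁ ≥ n such that X_{k₁-m} ≤_st Y_{k₁-n}, and there exists an integer k₂ with k₂ ≥ n and k₂ ≥ l such that Y_{k₂-n} ≤_st Z_{k₂-l}. Then there exists an integer k with k ≥ m and k ≥ l such that X_{k-m} ≤_st Z_{k-l}. -/

import Mathlib

universe u

/-- `DegLE A M N` : `M ≤_deg N`, i.e. there exist a finitely generated `A`-module `Z`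
and a short exact sequence `0 → N → M ⊕ Z → Z → 0`. -/
def DegLE (A : Type u) [Ring A] (M : Type u) [AddCommGroup M] [Module A M]
    (N : Type u) [AddCommGroup N] [Module A N] : Prop :=
  ∃ (Z : Type u) (_ : AddCommGroup Z) (_ : Module A Z), Module.Finite A Z ∧
    ∃ (f : N →ₗ[A] M × Z) (g : M × Z →ₗ[A] Z),
      Function.Injective f ∧ Function.Surjective g ∧ LinearMap.range f = LinearMap.ker g

/-- `StDegLE A X Y` : `X ≤_st Y`, i.e. there exist finitely generated projective
`A`-modules `P` and `Q` with `X ⊕ P ≤_deg Y ⊕ Q`. -/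
def StDegLE (A : Type u) [Ring A] (X : Type u) [AddCommGroup X] [Module A X]
    (Y : Type u) [AddCommGroup Y] [Module A Y] : Prop :=
  ∃ (P : Type u) (_ : AddCommGroup P) (_ : Module A P)
    (Q : Type u) (_ : AddCommGroup Q) (_ : Module A Q),
    Module.Finite A P ∧ Module.Projective A P ∧
    Module.Finite A Q ∧ Module.Projective A Q ∧
    DegLE A (X × P) (Y × Q)

/-- A syzygy sequence for `Xs 0`: for each `i` there is a short exact sequence
`0 → Xs (i+1) → P → Xs i → 0` with `P` finitely generated projective. -/
def IsSyzygySeq (A : Type u) [Ring A] (Xs : ℕ → Type u)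
    [∀ i, AddCommGroup (Xs i)] [∀ i, Module A (Xs i)] : Prop :=
  ∀ i, ∃ (P : Type u) (_ : AddCommGroup P) (_ : Module A P),
    Module.Finite A P ∧ Module.Projective A P ∧
    ∃ (f : Xs (i + 1) →ₗ[A] P) (g : P →ₗ[A] Xs i),
      Function.Injective f ∧ Function.Surjective g ∧ LinearMap.range f = LinearMap.ker g

/-! Degenerations compose for the following reason. Let `0 → N → X → Z → 0` be exact with
`X = M × Z`, and let `0 → L → N × W → W → 0` be exact with the endomorphism `s` of `W` nilpotent;
over an Artinian ring, Fitting's lemma lets one divide out the part of `W` on which `s` is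
bijective. Pushing `N → W` out along `N → X` as often as the nilpotency index of `s` gives a module
`D` and a bicartesian square with top `N × W → X × D`, bottom `W → D × Z` and left side
`N × W → W`. Opposite sides of a bicartesian square have the same kernel and cokernel, so
`0 → L → X × D → D × Z → 0` is exact, and this is a degeneration of `M` to `L` through `D × Z`.

Stable degeneration passes to syzygies by comparing, with Schanuel's lemma, two projective
presentations of the middle term of `0 → Y → X × Z → Z → 0`. Hence both hypotheses can be moved to a
common index. -/

section ShortExact

universe v w

variable {A : Type*} [Ring A]
  {M N P Q M' N' P' : Type*}
  [AddCommGroup M] [Module A M] [AddCommGroup N] [Module A N] [AddCommGroup P] [Module A P]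
  [AddCommGroup Q] [Module A Q] [AddCommGroup M'] [Module A M'] [AddCommGroup N'] [Module A N']
  [AddCommGroup P'] [Module A P']

/-- `IsShortExact f g`: the sequence `0 → N → M → P → 0` with maps `f` and `g` is exact. -/
structure IsShortExact (f : N →ₗ[A] M) (g : M →ₗ[A] P) : Prop where
  injective : Function.Injective f
  exact : Function.Exact f g
  surjective : Function.Surjective g

theorem isShortExact_iff {f : N →ₗ[A] M} {g : M →ₗ[A] P} :
    IsShortExact f g ↔
      Function.Injective f ∧ Function.Surjective g ∧ LinearMap.range f = LinearMap.ker g :=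
  ⟨fun h => ⟨h.injective, h.surjective, h.exact.linearMap_ker_eq.symm⟩,
    fun h => ⟨h.1, LinearMap.exact_iff.2 h.2.2.symm, h.2.1⟩⟩

theorem isShortExact_ker_subtype {g : M →ₗ[A] P} (hg : Function.Surjective g) :
    IsShortExact (LinearMap.ker g).subtype g :=
  ⟨Subtype.val_injective, LinearMap.exact_subtype_ker_map g, hg⟩

theorem isShortExact_range_mkQ {f : N →ₗ[A] M} (hf : Function.Injective f) :
    IsShortExact f (LinearMap.range f).mkQ :=
  ⟨hf, LinearMap.exact_map_mkQ_range f, Submodule.mkQ_surjective _⟩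

namespace IsShortExact

variable {f : N →ₗ[A] M} {g : M →ₗ[A] P} {f' : N' →ₗ[A] M'} {g' : M' →ₗ[A] P'}

theorem congr (h : IsShortExact f g) (eN : N' ≃ₗ[A] N) (eM : M ≃ₗ[A] M') :
    IsShortExact (eM.toLinearMap ∘ₗ f ∘ₗ eN.toLinearMap) (g ∘ₗ eM.symm.toLinearMap) where
  injective := eM.injective.comp (h.injective.comp eN.injective)
  exact := fun x => by
    simp [h.exact (eM.symm x), Set.mem_range, eN.surjective.exists, eM.eq_symm_apply]
  surjective := h.surjective.comp eM.symm.surjective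

theorem prodMap (h : IsShortExact f g) (h' : IsShortExact f' g') :
    IsShortExact (f.prodMap f') (g.prodMap g') where
  injective := h.injective.prodMap h'.injective
  exact := fun ⟨x, x'⟩ => by simp [h.exact x, h'.exact x']
  surjective := h.surjective.prodMap h'.surjective

theorem prodMap_id_comp_fst (h : IsShortExact f g) :
    IsShortExact (f.prodMap (.id : Q →ₗ[A] Q)) (g ∘ₗ .fst A M Q) where
  injective := h.injective.prodMap Function.injective_id
  exact := fun ⟨x, q⟩ => by simp [h.exact x]
  surjective := h.surjective.comp Prod.fst_surjective

theorem inl_comp_prodMap_id (h : IsShortExact f g) :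
    IsShortExact (.inl A M Q ∘ₗ f) (g.prodMap (.id : Q →ₗ[A] Q)) where
  injective := LinearMap.inl_injective.comp h.injective
  exact := fun ⟨x, q⟩ => by simp [h.exact x, Prod.ext_iff, eq_comm (a := q)]
  surjective := h.surjective.prodMap Function.surjective_id

theorem nonempty_equiv_prod [Module.Projective A P] (h : IsShortExact f g) :
    Nonempty (M ≃ₗ[A] N × P) :=
  have splitting := Module.projective_lifting_property g .id h.surjective
  ⟨(h.exact.splitSurjectiveEquiv h.injective ⟨_, splitting.choose_spec⟩).1⟩

theorem exists_comp_eq (h : IsShortExact f g) {t : M →ₗ[A] Q} (ht : t ∘ₗ f = 0) :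
    ∃ τ : P →ₗ[A] Q, τ ∘ₗ g = t := by
  have hker : LinearMap.ker g ≤ LinearMap.ker t := by
    rw [h.exact.linearMap_ker_eq]
    exact LinearMap.range_le_ker_iff.2 ht
  refine ⟨(LinearMap.ker g).liftQ t hker ∘ₗ (g.quotKerEquivOfSurjective h.surjective).symm, ?_⟩
  ext m
  have hm : (g.quotKerEquivOfSurjective h.surjective).symm (g m) = (LinearMap.ker g).mkQ m :=
    (LinearEquiv.symm_apply_eq _).2 rfl
  simp [hm]

theorem exists_pullback {b : M →ₗ[A] Q} {b' : M' →ₗ[A] Q}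
    (h : IsShortExact f b) (h' : IsShortExact f' b') :
    ∃ (W : Submodule A (M × M')) (i : N →ₗ[A] W) (i' : N' →ₗ[A] W),
      IsShortExact i (.snd A M M' ∘ₗ W.subtype) ∧ IsShortExact i' (.fst A M M' ∘ₗ W.subtype) := by
  let W : Submodule A (M × M') := LinearMap.eqLocus (b ∘ₗ .fst A M M') (b' ∘ₗ .snd A M M')
  refine ⟨W,
    (LinearMap.inl A M M' ∘ₗ f).codRestrict W fun n => by simp [W, h.exact.apply_apply_eq_zero],
    (LinearMap.inr A M M' ∘ₗ f').codRestrict W fun n => by simp [W, h'.exact.apply_apply_eq_zero],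
    ⟨?_, ?_, ?_⟩, ⟨?_, ?_, ?_⟩⟩
  · exact fun n₁ n₂ hn => h.injective (congrArg (·.1.1) hn)
  · rintro ⟨⟨m, m'⟩, hm : b m = b' m'⟩
    constructor
    · rintro (rfl : m' = 0)
      obtain ⟨n, rfl⟩ := (h.exact m).1 (by rw [hm, map_zero])
      exact ⟨n, rfl⟩
    · rintro ⟨n, hn⟩
      exact (congrArg (·.1.2) hn).symm
  · intro m'
    obtain ⟨m, hm⟩ := h.surjective (b' m')
    exact ⟨⟨(m, m'), hm⟩, rfl⟩
  · exact fun n₁ n₂ hn => h'.injective (congrArg (·.1.2) hn)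
  · rintro ⟨⟨m, m'⟩, hm : b m = b' m'⟩
    constructor
    · rintro (rfl : m = 0)
      obtain ⟨n, rfl⟩ := (h'.exact m').1 (by rw [← hm, map_zero])
      exact ⟨n, rfl⟩
    · rintro ⟨n, hn⟩
      exact (congrArg (·.1.1) hn).symm
  · intro m
    obtain ⟨m', hm⟩ := h'.surjective (b m)
    exact ⟨⟨(m, m'), hm.symm⟩, rfl⟩

theorem schanuel [Module.Projective A M] [Module.Projective A M']
    {b : M →ₗ[A] Q} {b' : M' →ₗ[A] Q} (h : IsShortExact f b) (h' : IsShortExact f' b') :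
    Nonempty ((N × M') ≃ₗ[A] N' × M) := by
  obtain ⟨W, i, i', hi, hi'⟩ := exists_pullback h h'
  obtain ⟨e⟩ := hi.nonempty_equiv_prod
  obtain ⟨e'⟩ := hi'.nonempty_equiv_prod
  exact ⟨e.symm ≪≫ₗ e'⟩

theorem horseshoe (h : IsShortExact f g) {i : N' →ₗ[A] M'} {c : M' →ₗ[A] N}
    (hc : IsShortExact i c) [Module.Projective A Q] {d : Q →ₗ[A] P} (hd : Function.Surjective d) :
    ∃ (q : M' × Q →ₗ[A] M) (α : N' →ₗ[A] LinearMap.ker q)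
      (β : LinearMap.ker q →ₗ[A] LinearMap.ker d),
      Function.Surjective q ∧ IsShortExact α β := by
  obtain ⟨s, hs⟩ := Module.projective_lifting_property g d h.surjective
  replace hs : ∀ v, g (s v) = d v := LinearMap.congr_fun hs
  let q : M' × Q →ₗ[A] M := (f ∘ₗ c).coprod s
  have hgq : ∀ w, g (q w) = d w.2 := fun w => by simp [q, h.exact.apply_apply_eq_zero, hs]
  refine ⟨q,
    (LinearMap.inl A M' Q ∘ₗ i).codRestrict _ fun n => by simp [q, hc.exact.apply_apply_eq_zero],
    (LinearMap.snd A M' Q ∘ₗ (LinearMap.ker q).subtype).codRestrict _ fun w => by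
      simpa [w.2] using (hgq w).symm, ?_, ?_, ?_, ?_⟩
  · intro m
    obtain ⟨v, hv⟩ := hd (g m)
    obtain ⟨n, hn⟩ := (h.exact (m - s v)).1 (by rw [map_sub, hs, hv, sub_self])
    obtain ⟨u, rfl⟩ := hc.surjective n
    exact ⟨(u, v), by simp [q, hn]⟩
  · exact fun n₁ n₂ hn => hc.injective (congrArg (·.1.1) hn)
  · rintro ⟨⟨u, v⟩, hw : f (c u) + s v = 0⟩
    constructor
    · intro hv
      obtain rfl : v = 0 := congrArg Subtype.val hv
      rw [map_zero, add_zero] at hw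
      obtain ⟨n, rfl⟩ := (hc.exact u).1 (h.injective (hw.trans (map_zero f).symm))
      exact ⟨n, rfl⟩
    · rintro ⟨n, hn⟩
      exact Subtype.ext (congrArg (·.1.2) hn).symm
  · rintro ⟨v, hv⟩
    obtain ⟨n, hn⟩ := (h.exact (s v)).1 ((hs v).trans hv)
    obtain ⟨u, rfl⟩ := hc.surjective n
    exact ⟨⟨(-u, v), by simp [q, hn]⟩, rfl⟩

end IsShortExact

/-- The square with top `f : M → N`, left side `g : M → P`, right side `h : N → Q` and bottom
`k : P → Q` is both a pullback and a pushout, i.e. `0 → M → N × P → Q → 0` is exact for `h - k`. -/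
def IsBicartesian (f : M →ₗ[A] N) (g : M →ₗ[A] P) (h : N →ₗ[A] Q) (k : P →ₗ[A] Q) : Prop :=
  IsShortExact (f.prod g) (h.coprod (-k))

theorem isBicartesian_iff {f : M →ₗ[A] N} {g : M →ₗ[A] P} {h : N →ₗ[A] Q} {k : P →ₗ[A] Q} :
    IsBicartesian f g h k ↔
      (∀ m, f m = 0 → g m = 0 → m = 0) ∧
      (∀ n p, h n = k p ↔ ∃ m, f m = n ∧ g m = p) ∧
      ∀ q, ∃ n p, h n + k p = q := by
  have h_exact : Function.Exact (f.prod g) (h.coprod (-k)) ↔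
      ∀ n p, h n = k p ↔ ∃ m, f m = n ∧ g m = p := by
    simp [Function.Exact, ← sub_eq_add_neg, sub_eq_zero]
  rw [← h_exact]
  constructor
  · intro hsq
    refine ⟨fun m hf hg => hsq.injective (by simp [hf, hg]), hsq.exact, fun q => ?_⟩
    obtain ⟨⟨n, p⟩, hq⟩ := hsq.surjective q
    exact ⟨n, -p, by simpa using hq⟩
  · rintro ⟨hinj, hex, hsurj⟩
    refine ⟨(injective_iff_map_eq_zero _).2 fun m hm => ?_, hex, fun q => ?_⟩
    · exact hinj m (congrArg Prod.fst hm) (congrArg Prod.snd hm)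
    · obtain ⟨n, p, hq⟩ := hsurj q
      exact ⟨(n, -p), by simpa using hq⟩

theorem IsBicartesian.apply_eq {f : M →ₗ[A] N} {g : M →ₗ[A] P} {h : N →ₗ[A] Q} {k : P →ₗ[A] Q}
    (hsq : IsBicartesian f g h k) (m : M) : h (f m) = k (g m) :=
  ((isBicartesian_iff.1 hsq).2.1 _ _).2 ⟨m, rfl, rfl⟩

theorem IsBicartesian.isShortExact {f : M →ₗ[A] N} {g : M →ₗ[A] P} {h : N →ₗ[A] Q}
    {k : P →ₗ[A] Q} (hsq : IsBicartesian f g h k) {i : M' →ₗ[A] M} (hi : IsShortExact i g) :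
    IsShortExact (f ∘ₗ i) h := by
  obtain ⟨hinj, hpull, hpush⟩ := isBicartesian_iff.1 hsq
  refine ⟨(injective_iff_map_eq_zero _).2 fun x hx => ?_, fun n => ?_, fun q => ?_⟩
  · exact hi.injective ((hinj (i x) hx (hi.exact.apply_apply_eq_zero x)).trans (map_zero i).symm)
  · rw [← map_zero k, hpull]
    constructor
    · rintro ⟨m, rfl, hm⟩
      obtain ⟨x, rfl⟩ := (hi.exact m).1 hm
      exact ⟨x, rfl⟩
    · rintro ⟨x, rfl⟩
      exact ⟨i x, rfl, hi.exact.apply_apply_eq_zero x⟩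
  · obtain ⟨n, p, rfl⟩ := hpush q
    obtain ⟨m, rfl⟩ := hi.surjective p
    exact ⟨n + f m, by rw [map_add, hsq.apply_eq]⟩

theorem isBicartesian_of_bijOn_ker {p : M →ₗ[A] N} {g : M →ₗ[A] P} {h : N →ₗ[A] Q} {q : P →ₗ[A] Q}
    (hp : Function.Surjective p) (hq : Function.Surjective q) (hcomm : ∀ m, h (p m) = q (g m))
    (hg : Set.BijOn g (LinearMap.ker p) (LinearMap.ker q)) : IsBicartesian p g h q := by
  refine isBicartesian_iff.2 ⟨fun m hpm hgm => ?_, fun n y => ⟨fun hny => ?_, ?_⟩, fun y => ?_⟩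
  · exact hg.injOn hpm (zero_mem _) (hgm.trans (map_zero g).symm)
  · obtain ⟨m, rfl⟩ := hp n
    have hdiff : g m - y ∈ LinearMap.ker q := by
      rw [LinearMap.sub_mem_ker_iff, ← hcomm, hny]
    obtain ⟨m', hm', hgm'⟩ := hg.surjOn hdiff
    exact ⟨m - m', by rw [map_sub, hm', sub_zero], by rw [map_sub, hgm', sub_sub_cancel]⟩
  · rintro ⟨m, rfl, rfl⟩
    exact hcomm m
  · obtain ⟨z, rfl⟩ := hq y
    exact ⟨0, z, by simp⟩

theorem IsBicartesian.exists_desc {f : M →ₗ[A] N} {g : M →ₗ[A] P} {h : N →ₗ[A] Q} {k : P →ₗ[A] Q}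
    (hsq : IsBicartesian f g h k) {t : N →ₗ[A] M'} {u : P →ₗ[A] M'} (htu : t ∘ₗ f = u ∘ₗ g) :
    ∃ τ : Q →ₗ[A] M', τ ∘ₗ h = t ∧ τ ∘ₗ k = u := by
  obtain ⟨τ, hτ⟩ := hsq.exists_comp_eq (t := t.coprod (-u)) (by
    rw [LinearMap.coprod_comp_prod, htu, LinearMap.neg_comp, add_neg_cancel])
  replace hτ : ∀ n p, τ (h n - k p) = t n - u p := fun n p => by
    simpa [sub_eq_add_neg] using LinearMap.congr_fun hτ (n, p)
  exact ⟨τ, LinearMap.ext fun n => by simpa using hτ n 0, LinearMap.ext fun p => by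
    simpa using hτ 0 p⟩

theorem IsBicartesian.injective {f : M →ₗ[A] N} {g : M →ₗ[A] P} {h : N →ₗ[A] Q}
    {k : P →ₗ[A] Q} (hsq : IsBicartesian f g h k) (hf : Function.Injective f) :
    Function.Injective k := by
  refine (injective_iff_map_eq_zero _).2 fun p hp => ?_
  obtain ⟨m, hm, rfl⟩ := ((isBicartesian_iff.1 hsq).2.1 0 p).1 ((map_zero h).trans hp.symm)
  rw [(map_eq_zero_iff f hf).1 hm, map_zero]

theorem IsBicartesian.exists_isShortExact {f : M →ₗ[A] N} {g : M →ₗ[A] P} {h : N →ₗ[A] Q}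
    {k : P →ₗ[A] Q} (hsq : IsBicartesian f g h k) {c : N →ₗ[A] N'} (hc : IsShortExact f c) :
    ∃ ρ : Q →ₗ[A] N', IsShortExact k ρ := by
  obtain ⟨-, -, hpush⟩ := isBicartesian_iff.1 hsq
  obtain ⟨ρ, hρh, hρk⟩ := hsq.exists_desc (t := c) (u := 0) (by
    rw [hc.exact.linearMap_comp_eq_zero, LinearMap.zero_comp])
  replace hρh : ∀ n, ρ (h n) = c n := LinearMap.congr_fun hρh
  replace hρk : ∀ p, ρ (k p) = 0 := LinearMap.congr_fun hρk
  refine ⟨ρ, hsq.injective hc.injective, fun q => ⟨fun hq => ?_, ?_⟩, fun x => ?_⟩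
  · obtain ⟨n, p, rfl⟩ := hpush q
    rw [map_add, hρh, hρk, add_zero] at hq
    obtain ⟨m, rfl⟩ := (hc.exact n).1 hq
    exact ⟨g m + p, by rw [map_add, hsq.apply_eq]⟩
  · rintro ⟨p, rfl⟩
    exact hρk p
  · obtain ⟨n, rfl⟩ := hc.surjective x
    exact ⟨h n, hρh n⟩

theorem exists_isBicartesian_of_injective {N : Type v} {P : Type w}
    [AddCommGroup N] [Module A N] [AddCommGroup P] [Module A P] {f : M →ₗ[A] N}
    (hf : Function.Injective f) (g : M →ₗ[A] P) :
    ∃ (Q : Type (max v w)) (_ : AddCommGroup Q) (_ : Module A Q) (h : N →ₗ[A] Q) (k : P →ₗ[A] Q),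
      IsBicartesian f g h k := by
  let mkQ := (LinearMap.range (f.prod g)).mkQ
  refine ⟨_, _, _, mkQ ∘ₗ .inl A N P, -(mkQ ∘ₗ .inr A N P), ?_⟩
  have h := isShortExact_range_mkQ (f := f.prod g) fun m₁ m₂ hm => hf (congrArg Prod.fst hm)
  rwa [IsBicartesian, neg_neg, ← LinearMap.comp_coprod, LinearMap.coprod_inl_inr,
    LinearMap.comp_id]

theorem IsBicartesian.of_comp {X Z W D D' : Type*} [AddCommGroup X] [Module A X]
    [AddCommGroup Z] [Module A Z] [AddCommGroup W] [Module A W] [AddCommGroup D] [Module A D]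
    [AddCommGroup D'] [Module A D'] {f : N →ₗ[A] X} (hf : Function.Injective f) {b : N →ₗ[A] W}
    {s : Module.End A W} {i : W →ₗ[A] D} {T : X × D →ₗ[A] D × Z}
    (hT : IsBicartesian (f.prodMap i) ((s ∘ₗ b).coprod s) T (.inl A D Z ∘ₗ i))
    {j : X →ₗ[A] D'} {k : D →ₗ[A] D'} (hjk : IsBicartesian f (i ∘ₗ b) j k)
    {τ : D' →ₗ[A] D × Z} (hτj : τ ∘ₗ j = T ∘ₗ .inl A X D) (hτk : τ ∘ₗ k = T ∘ₗ .inr A X D) :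
    IsBicartesian (f.prodMap (k ∘ₗ i)) (b.coprod s)
      ((j.coprod (k ∘ₗ .fst A D Z ∘ₗ τ)).prod (.snd A D Z ∘ₗ τ ∘ₗ .snd A X D'))
      (.inl A D' Z ∘ₗ k ∘ₗ i) := by
  obtain ⟨hT_inj, hT_pull, hT_push⟩ := isBicartesian_iff.1 hT
  obtain ⟨-, hjk_pull, hjk_push⟩ := isBicartesian_iff.1 hjk
  have hjf : ∀ n, j (f n) = k (i (b n)) := hjk.apply_eq
  have hTfi : ∀ n w, T (f n, i w) = (i (s (b n) + s w), 0) := fun n w => hT.apply_eq (n, w)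
  have hτ : ∀ x d, τ (j x + k d) = T (x, d) := fun x d => by
    rw [map_add, ← LinearMap.comp_apply, hτj, ← LinearMap.comp_apply, hτk]
    simp [← map_add]
  refine isBicartesian_iff.2 ⟨?_, fun ⟨x, y⟩ w => ⟨fun hxy => ?_, ?_⟩, ?_⟩
  · rintro ⟨n, w⟩ hfki hbs
    obtain ⟨hn, hw⟩ := Prod.mk_eq_zero.1 hfki
    obtain rfl : n = 0 := (map_eq_zero_iff f hf).1 hn
    have hiw : i w = 0 := (map_eq_zero_iff k (hjk.injective hf)).1 hw
    exact hT_inj (0, w) (by simpa using hiw) (by simpa using hbs)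
  · obtain ⟨x₁, d₁, rfl⟩ := hjk_push y
    obtain ⟨h₁, h₂⟩ : j x + k (T (x₁, d₁)).1 = k (i w) ∧ (T (x₁, d₁)).2 = 0 := by
      rw [← hτ]
      exact Prod.mk.inj hxy
    obtain ⟨n, rfl, hn : i (b n) = _⟩ := (hjk_pull x (i w - (T (x₁, d₁)).1)).1 (by
      rw [map_sub, eq_sub_iff_add_eq, h₁])
    obtain ⟨⟨n₁, w₁⟩, hfi, hsb : s (b n₁) + s w₁ = w - b n⟩ :=
      (hT_pull (x₁, d₁) (w - b n)).1 (Prod.ext (by simp [hn]) h₂)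
    obtain ⟨rfl, rfl⟩ : f n₁ = x₁ ∧ i w₁ = d₁ := Prod.mk.inj hfi
    exact ⟨(n, b n₁ + w₁), by simp [hjf], by simp [hsb]⟩
  · rintro ⟨⟨n, w'⟩, hxy, rfl⟩
    obtain ⟨rfl, rfl⟩ : f n = x ∧ k (i w') = y := Prod.mk.inj hxy
    have hτw : τ (k (i w')) = (i (s w'), 0) := by simpa using (hτ (f 0) (i w')).trans (hTfi 0 w')
    simp [hτw, hjf]
  · rintro ⟨y, z⟩
    obtain ⟨x, d, rfl⟩ := hjk_push y
    obtain ⟨⟨x₁, d₁⟩, w, hw⟩ := hT_push (d, z)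
    obtain ⟨rfl, rfl⟩ : (T (x₁, d₁)).1 + i w = d ∧ (T (x₁, d₁)).2 + 0 = z := Prod.mk.inj hw
    exact ⟨(x, j x₁ + k d₁), w, by simp [-map_add, hτ, add_assoc, ← map_add]⟩

end ShortExact

section Nilpotent

variable {A : Type*} [Ring A]

theorem exists_bijOn_range_pow {M : Type*} [AddCommGroup M] [Module A M]
    [IsArtinian A M] [IsNoetherian A M] (t : Module.End A M) :
    ∃ r, Set.BijOn t (LinearMap.range (t ^ r)) (LinearMap.range (t ^ r)) := by
  obtain ⟨r, hr⟩ := ((Filter.tendsto_add_atTop_nat 1).eventually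
    t.eventually_isCompl_ker_pow_range_pow).exists
  refine ⟨r + 1, ?_, ?_, ?_⟩
  · rintro _ ⟨y, rfl⟩
    exact ⟨t y, by simp only [← Module.End.mul_apply, pow_mul_comm']⟩
  · refine LinearMap.injOn_of_disjoint_ker le_rfl ?_
    refine hr.disjoint.symm.mono_right fun z hz => ?_
    rw [LinearMap.mem_ker, pow_succ, Module.End.mul_apply, hz, map_zero]
  · rintro _ ⟨y, rfl⟩
    obtain ⟨k, hk, _, ⟨y', rfl⟩, rfl⟩ :=
      Submodule.mem_sup.1 (hr.sup_eq_top ▸ Submodule.mem_top : y ∈ _ ⊔ _)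
    refine ⟨(t ^ (r + 1)) ((t ^ r) y'), ⟨_, rfl⟩, ?_⟩
    rw [map_add, hk, zero_add]
    simp only [← Module.End.mul_apply, ← pow_add, ← pow_succ', ← add_assoc]

end Nilpotent

section Degeneration

variable {A : Type u} [Ring A]
  {M N L P Q X Y Z W M' N' : Type u}
  [AddCommGroup M] [Module A M] [AddCommGroup N] [Module A N] [AddCommGroup L] [Module A L]
  [AddCommGroup P] [Module A P] [AddCommGroup Q] [Module A Q] [AddCommGroup X] [Module A X]
  [AddCommGroup Y] [Module A Y] [AddCommGroup Z] [Module A Z] [AddCommGroup W] [Module A W]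
  [AddCommGroup M'] [Module A M'] [AddCommGroup N'] [Module A N']

theorem degLE_iff :
    DegLE A M N ↔ ∃ (Z : Type u) (_ : AddCommGroup Z) (_ : Module A Z), Module.Finite A Z ∧
      ∃ (f : N →ₗ[A] M × Z) (g : M × Z →ₗ[A] Z), IsShortExact f g := by
  simp only [DegLE, isShortExact_iff]

theorem IsShortExact.degLE [Module.Finite A Z] {f : N →ₗ[A] X} {g : X →ₗ[A] Z}
    (h : IsShortExact f g) (e : X ≃ₗ[A] M × Z) : DegLE A M N :=
  degLE_iff.2 ⟨Z, _, _, inferInstance, _, _, h.congr (.refl A N) e⟩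

/-- The canonical isomorphism `(M × N) × L ≃ (M × L) × N`. -/
def prodRightComm (A M N L : Type*) [Ring A] [AddCommGroup M] [Module A M] [AddCommGroup N]
    [Module A N] [AddCommGroup L] [Module A L] : ((M × N) × L) ≃ₗ[A] (M × L) × N :=
  .prodAssoc A M N L ≪≫ₗ .prodCongr (.refl A M) (.prodComm A N L) ≪≫ₗ (.symm <| .prodAssoc A M L N)

theorem DegLE.congr (h : DegLE A M N) (eM : M ≃ₗ[A] M') (eN : N ≃ₗ[A] N') : DegLE A M' N' := by
  obtain ⟨Z, _, _, _, f, g, hfg⟩ := degLE_iff.1 h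
  exact (hfg.congr eN.symm (.refl A _)).degLE (eM.prodCongr (.refl A Z))

theorem DegLE.prod_right (h : DegLE A M N) (P : Type u) [AddCommGroup P] [Module A P] :
    DegLE A (M × P) (N × P) := by
  obtain ⟨Z, _, _, _, f, g, hfg⟩ := degLE_iff.1 h
  exact hfg.prodMap_id_comp_fst.degLE (prodRightComm A M Z P)

theorem DegLE.exists_isNilpotent [IsArtinianRing A] (h : DegLE A M N) :
    ∃ (Z : Type u) (_ : AddCommGroup Z) (_ : Module A Z), Module.Finite A Z ∧
      ∃ (f : N →ₗ[A] M × Z) (b : M →ₗ[A] Z) (s : Module.End A Z),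
        IsShortExact f (b.coprod s) ∧ IsNilpotent s := by
  obtain ⟨Z, _, _, _, f, g, hfg⟩ := degLE_iff.1 h
  let t : Module.End A Z := g ∘ₗ .inr A M Z
  obtain ⟨r, ht⟩ := exists_bijOn_range_pow t
  let R := LinearMap.range (t ^ r)
  have htR : R ≤ R.comap t := ht.mapsTo
  let p : M × Z →ₗ[A] M × (Z ⧸ R) := LinearMap.prodMap .id R.mkQ
  have hg_bijOn : Set.BijOn g (LinearMap.ker p) (LinearMap.ker R.mkQ) := by
    have hker : (LinearMap.ker p : Set (M × Z)) = LinearMap.inr A M Z '' R := by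
      ext ⟨m, z⟩
      simp [p, and_comm, eq_comm (a := m)]
    rw [hker, Submodule.ker_mkQ]
    exact (Set.bijOn_comp_iff LinearMap.inr_injective.injOn).1 ht
  have hsq : IsBicartesian p g ((R.mkQ ∘ₗ g ∘ₗ .inl A M Z).coprod (R.mapQ R t htR)) R.mkQ := by
    refine isBicartesian_of_bijOn_ker (Function.surjective_id.prodMap R.mkQ_surjective)
      R.mkQ_surjective (fun ⟨m, z⟩ => ?_) hg_bijOn
    simp only [p, t]
    simp [← Submodule.Quotient.mk_add, ← map_add]
  refine ⟨Z ⧸ R, _, _, inferInstance, _, _, _, hsq.isShortExact hfg, r, ?_⟩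
  rw [← Submodule.mapQ_pow]
  ext z
  simp [R]

theorem IsBicartesian.exists_of_comp {D : Type u} [AddCommGroup D] [Module A D] [Module.Finite A D]
    [Module.Finite A Z] {f : N →ₗ[A] X} {g : X →ₗ[A] Z} (hfg : IsShortExact f g)
    {b : N →ₗ[A] W} {s : Module.End A W} {i : W →ₗ[A] D} {T : X × D →ₗ[A] D × Z}
    (hT : IsBicartesian (f.prodMap i) ((s ∘ₗ b).coprod s) T (.inl A D Z ∘ₗ i)) :
    ∃ (D' : Type u) (_ : AddCommGroup D') (_ : Module A D'), Module.Finite A D' ∧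
      ∃ (i' : W →ₗ[A] D') (T' : X × D' →ₗ[A] D' × Z),
        IsBicartesian (f.prodMap i') (b.coprod s) T' (.inl A D' Z ∘ₗ i') := by
  obtain ⟨D', _, _, j, k, hjk⟩ := exists_isBicartesian_of_injective hfg.injective (i ∘ₗ b)
  obtain ⟨ρ, hkρ⟩ := hjk.exists_isShortExact hfg
  have hT_zero : ∀ n, T (f n, i (-b n)) = 0 := fun n =>
    (hT.apply_eq (n, -b n)).trans (by simp)
  obtain ⟨τ, hτj, hτk⟩ := hjk.exists_desc (t := T ∘ₗ .inl A X D) (u := T ∘ₗ .inr A X D) (by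
    ext1 n
    refine sub_eq_zero.1 (Eq.trans ?_ (hT_zero n))
    simp [← map_sub])
  exact ⟨D', _, _, .of_exact hkρ.exact hkρ.surjective, _, _,
    hT.of_comp hfg.injective hjk hτj hτk⟩

theorem IsShortExact.exists_isBicartesian_of_pow_comp_eq_zero [Module.Finite A Z]
    [Module.Finite A W] {f : N →ₗ[A] X} {g : X →ₗ[A] Z} (hfg : IsShortExact f g) (b : N →ₗ[A] W)
    (s : Module.End A W) (r : ℕ) (hr : (s ^ r) ∘ₗ b = 0) :
    ∃ (D : Type u) (_ : AddCommGroup D) (_ : Module A D), Module.Finite A D ∧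
      ∃ (i : W →ₗ[A] D) (T : X × D →ₗ[A] D × Z),
        IsBicartesian (f.prodMap i) (b.coprod s) T (.inl A D Z ∘ₗ i) := by
  induction r generalizing b with
  | zero =>
    obtain rfl : b = 0 := hr
    refine ⟨W, _, _, inferInstance, .id, (s ∘ₗ .snd A X W).prod (g ∘ₗ .fst A X W),
      isBicartesian_iff.2 ⟨?_, ?_, ?_⟩⟩
    · exact fun v hv _ => hfg.prodMap_id_comp_fst.injective (hv.trans (map_zero _).symm)
    · rintro ⟨x, w⟩ w'
      simp [hfg.exact x, and_comm]
    · rintro ⟨w, z⟩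
      obtain ⟨x, rfl⟩ := hfg.surjective z
      exact ⟨(x, 0), w, by simp⟩
  | succ r ih =>
    obtain ⟨D, _, _, _, i, T, hsq⟩ := ih (s ∘ₗ b) (by rw [← hr, pow_succ]; rfl)
    exact hsq.exists_of_comp hfg

theorem DegLE.trans [IsArtinianRing A] (h₁ : DegLE A M N) (h₂ : DegLE A N L) : DegLE A M L := by
  obtain ⟨Z, _, _, _, f, g, hfg⟩ := degLE_iff.1 h₁
  obtain ⟨W, _, _, _, j, b, s, hW, r, hr⟩ := h₂.exists_isNilpotent
  obtain ⟨D, _, _, _, i, T, hsq⟩ :=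
    hfg.exists_isBicartesian_of_pow_comp_eq_zero b s r (by rw [hr, LinearMap.zero_comp])
  exact (hsq.isShortExact hW).degLE
    (prodRightComm A M Z D ≪≫ₗ .prodAssoc A M D Z)

theorem StDegLE.trans [IsArtinianRing A] (h₁ : StDegLE A M N) (h₂ : StDegLE A N L) :
    StDegLE A M L := by
  obtain ⟨P, _, _, Q, _, _, _, _, _, _, h₁⟩ := h₁
  obtain ⟨P', _, _, Q', _, _, _, _, _, _, h₂⟩ := h₂
  have h₁' : DegLE A (M × (P × P')) ((N × P') × Q) :=
    (h₁.prod_right P').congr (.prodAssoc A M P P') (prodRightComm A N Q P')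
  have h₂' : DegLE A ((N × P') × Q) (L × (Q' × Q)) :=
    (h₂.prod_right Q).congr (.refl A _) (.prodAssoc A L Q' Q)
  exact ⟨P × P', _, _, Q' × Q, _, _, inferInstance, inferInstance, inferInstance, inferInstance,
    h₁'.trans h₂'⟩

section Syzygy

variable [IsNoetherianRing A] [Module.Finite A P] [Module.Projective A P] [Module.Finite A Q]
  [Module.Projective A Q] {f : M →ₗ[A] P} {g : P →ₗ[A] X} {f' : N →ₗ[A] Q} {g' : Q →ₗ[A] Y}

theorem DegLE.stDegLE_syzygy (h : DegLE A X Y) (hX : IsShortExact f g) (hY : IsShortExact f' g') :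
    StDegLE A M N := by
  obtain ⟨Z, _, _, _, ι, π, hιπ⟩ := degLE_iff.1 h
  obtain ⟨n, d, hd⟩ := Module.Finite.exists_fin' A Z
  let F := Fin n → A
  let K := LinearMap.ker d
  obtain ⟨q, α, β, hq, hαβ⟩ := hιπ.horseshoe hY hd
  obtain ⟨e⟩ := (isShortExact_ker_subtype hq).schanuel (hX.prodMap (isShortExact_ker_subtype hd))
  exact ⟨Q × F, _, _, P × F, _, _, inferInstance, inferInstance, inferInstance, inferInstance,
    hαβ.prodMap_id_comp_fst.degLE (e ≪≫ₗ prodRightComm A M K (Q × F))⟩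

theorem StDegLE.syzygy (h : StDegLE A X Y) (hX : IsShortExact f g) (hY : IsShortExact f' g') :
    StDegLE A M N := by
  obtain ⟨P', _, _, Q', _, _, _, _, _, _, h⟩ := h
  exact h.stDegLE_syzygy hX.inl_comp_prodMap_id hY.inl_comp_prodMap_id

end Syzygy

section SyzygySequence

variable [IsNoetherianRing A]
  {Xs : ℕ → Type u} [∀ i, AddCommGroup (Xs i)] [∀ i, Module A (Xs i)]
  {Ys : ℕ → Type u} [∀ i, AddCommGroup (Ys i)] [∀ i, Module A (Ys i)]

theorem StDegLE.add_right (hXs : IsSyzygySeq A Xs) (hYs : IsSyzygySeq A Ys) {i j : ℕ}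
    (h : StDegLE A (Xs i) (Ys j)) (d : ℕ) : StDegLE A (Xs (i + d)) (Ys (j + d)) := by
  induction d with
  | zero => exact h
  | succ d ih =>
    obtain ⟨P, _, _, _, _, f, g, hfg⟩ := hXs (i + d)
    obtain ⟨Q, _, _, _, _, f', g', hfg'⟩ := hYs (j + d)
    exact ih.syzygy (isShortExact_iff.2 hfg) (isShortExact_iff.2 hfg')

theorem StDegLE.mono_index (hXs : IsSyzygySeq A Xs) (hYs : IsSyzygySeq A Ys) {m n k k' : ℤ}
    (hm : m ≤ k) (hn : n ≤ k) (hk : k ≤ k') (h : StDegLE A (Xs (k - m).toNat) (Ys (k - n).toNat)) :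
    StDegLE A (Xs (k' - m).toNat) (Ys (k' - n).toNat) := by
  obtain ⟨d, rfl⟩ := Int.le.dest hk
  have h_shift : ∀ j ≤ k, (k + d - j).toNat = (k - j).toNat + d := by lia
  rw [h_shift m hm, h_shift n hn]
  exact h.add_right hXs hYs d

end SyzygySequence

end Degeneration

theorem quasi_stable_degeneration_trans_general (A : Type u) [Ring A] [IsArtinianRing A]
    (Xs : ℕ → Type u) [∀ i, AddCommGroup (Xs i)] [∀ i, Module A (Xs i)]
    (Ys : ℕ → Type u) [∀ i, AddCommGroup (Ys i)] [∀ i, Module A (Ys i)]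
    (Zs : ℕ → Type u) [∀ i, AddCommGroup (Zs i)] [∀ i, Module A (Zs i)]
    (hXs : IsSyzygySeq A Xs) (hYs : IsSyzygySeq A Ys) (hZs : IsSyzygySeq A Zs)
    (m n l : ℤ)
    (h₁ : ∃ k₁ : ℤ, m ≤ k₁ ∧ n ≤ k₁ ∧ StDegLE A (Xs (k₁ - m).toNat) (Ys (k₁ - n).toNat))
    (h₂ : ∃ k₂ : ℤ, n ≤ k₂ ∧ l ≤ k₂ ∧ StDegLE A (Ys (k₂ - n).toNat) (Zs (k₂ - l).toNat)) :
    ∃ k : ℤ, m ≤ k ∧ l ≤ k ∧ StDegLE A (Xs (k - m).toNat) (Zs (k - l).toNat) := by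
  obtain ⟨k₁, hm₁, hn₁, h₁⟩ := h₁
  obtain ⟨k₂, hn₂, hl₂, h₂⟩ := h₂
  exact ⟨max k₁ k₂, le_max_of_le_left hm₁, le_max_of_le_right hl₂,
    (h₁.mono_index hXs hYs hm₁ hn₁ (le_max_left k₁ k₂)).trans
      (h₂.mono_index hYs hZs hn₂ hl₂ (le_max_right k₁ k₂))⟩

/-- Transitivity of quasi-stable degeneration. -/
theorem quasi_stable_degeneration_trans
    (k : Type u) [Field k] (A : Type u) [Ring A] [Algebra k A] [FiniteDimensional k A]
    (Xs : ℕ → Type u) [∀ i, AddCommGroup (Xs i)] [∀ i, Module A (Xs i)]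
    [∀ i, Module.Finite A (Xs i)]
    (Ys : ℕ → Type u) [∀ i, AddCommGroup (Ys i)] [∀ i, Module A (Ys i)]
    [∀ i, Module.Finite A (Ys i)]
    (Zs : ℕ → Type u) [∀ i, AddCommGroup (Zs i)] [∀ i, Module A (Zs i)]
    [∀ i, Module.Finite A (Zs i)]
    (hXs : IsSyzygySeq A Xs) (hYs : IsSyzygySeq A Ys) (hZs : IsSyzygySeq A Zs)
    (m n l : ℤ)
    (h₁ : ∃ k₁ : ℤ, m ≤ k₁ ∧ n ≤ k₁ ∧ StDegLE A (Xs (k₁ - m).toNat) (Ys (k₁ - n).toNat))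
    (h₂ : ∃ k₂ : ℤ, n ≤ k₂ ∧ l ≤ k₂ ∧ StDegLE A (Ys (k₂ - n).toNat) (Zs (k₂ - l).toNat)) :
    ∃ k : ℤ, m ≤ k ∧ l ≤ k ∧ StDegLE A (Xs (k - m).toNat) (Zs (k - l).toNat) := by
  have : IsArtinianRing A := .of_finite k A
  exact quasi_stable_degeneration_trans_general A Xs Ys Zs hXs hYs hZs m n l h₁ h₂
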